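/- For every integer n ≥ 2 there exists a finite left brace B such that B is simple, B is not a trivial brace, and the multiplicative group (B,·) of B is solvable of derived length exactly n + 1. -/

import Mathlib

/-- A witness that there is a finite simple non-trivial left brace whose multiplicative
group is solvable of derived length exactly `n + 1`. -/
structure SimpleSolvableBraceWitness (n : ℕ) : Type 1 where
  /-- the underlying set of the left brace -/
  B : Type
  /-- the additive abelian group structure -/
  [addgrp : AddCommGroup B]
  /-- the multiplicative group structure -/
  [grp : Group B]
  /-- the left brace compatibility law `a·(b+c)+a = a·b+a·c` -/
  compat : ∀ a b c : B, a * (b + c) + a = a * b + a * c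
  /-- the left brace is finite -/
  finiteB : Finite B
  /-- the left brace is not a trivial brace -/
  nontrivial_brace : ∃ a b : B, a * b ≠ a + b
  /-- the left brace is non-zero -/
  nonzero : ∃ x : B, x ≠ 0
  /-- the left brace is simple: its only ideals (normal subgroups of `(B,·)` closed
  under the lambda maps `λ_b(x) = b·x − b`) are `{0}` and `B` -/
  simple : ∀ N : Set B,
    ((1 : B) ∈ N ∧ (∀ x ∈ N, ∀ y ∈ N, x * y ∈ N) ∧ (∀ x ∈ N, x⁻¹ ∈ N) ∧
      (∀ g : B, ∀ x ∈ N, g * x * g⁻¹ ∈ N) ∧ (∀ b : B, ∀ x ∈ N, b * x - b ∈ N)) →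
    N = {(0 : B)} ∨ N = Set.univ
  /-- the multiplicative group is solvable of derived length exactly `n + 1` -/
  derived_length : derivedSeries B (n + 1) = ⊥ ∧ ∀ m < n + 1, derivedSeries B m ≠ ⊥

/-!
Given a left brace `T` acting by automorphisms on an abelian group `V`, and a symmetric biadditive
map `b : V × V → T` compatible with the action and the lambda map, the asymmetric product of `V` by
`T` is the set `V × T` with multiplicative group `V ⋊ T` and addition twisted by the cocycle `b`.
With `b = 0`, iterated products climb one derived step at a time. A nondegenerate `b` then makes the
last product simple: every nonzero vector of an ideal pairs with some vector to an element `c`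
that generates `T` as an ideal.

Such a `b` exists for all derived lengths thanks to two elements carried along the iteration: an
involution `z`, and an element `c` of order `3` fixed by the lambda maps. The module is induced from
the sign character of `⟨z⟩` over `𝔽₃`, and `b` is its standard invariant form, with values in
`⟨c⟩ ≅ 𝔽₃`. The iteration starts from `𝔽₂² ⋊ 𝔽₃`, whose multiplicative group is `A₄`.
-/

open scoped commutatorElement

/-- A left brace: an abelian group `(B, +)` and a group `(B, ·)` linked by
`a·(b+c)+a = a·b+a·c`. -/
class LeftBrace (B : Type*) extends Group B, AddCommGroup B where
  mul_add_add : ∀ a b c : B, a * (b + c) + a = a * b + a * c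

namespace LeftBrace

variable {B T : Type*} [LeftBrace B] [LeftBrace T]

theorem one_eq_zero : (1 : B) = 0 := by
  simpa using mul_add_add (1 : B) 0 0

/-- The lambda map `λ_a(x) = a·x − a`, as an additive endomorphism. -/
def lambda (a : B) : B →+ B :=
  AddMonoidHom.mk' (fun x => a * x - a) fun x y => by
    rw [sub_add_sub_comm, ← mul_add_add, add_sub_add_right_eq_sub]

theorem lambda_apply (a x : B) : lambda a x = a * x - a := rfl

theorem mul_eq_add_lambda (a x : B) : a * x = a + lambda a x := by
  rw [lambda_apply, add_sub_cancel]

/-- An ideal of a left brace: a normal subgroup of `(B, ·)` stable under the lambda maps. -/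
structure IsIdeal (N : Subgroup B) : Prop where
  normal : N.Normal
  lambda_mem : ∀ (a : B) {x : B}, x ∈ N → lambda a x ∈ N

theorem IsIdeal.sub_mem {N : Subgroup B} (hN : IsIdeal N) {x y : B} (hx : x ∈ N) (hy : y ∈ N) :
    x - y ∈ N := by
  simpa [lambda_apply] using hN.lambda_mem y (N.mul_mem (N.inv_mem hy) hx)

theorem IsIdeal.commutator_mem {N : Subgroup B} (hN : IsIdeal N) (a : B) {x : B} (hx : x ∈ N) :
    ⁅a, x⁆ ∈ N :=
  N.mul_mem (hN.normal.conj_mem x hx a) (N.inv_mem hx)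

theorem IsIdeal.comap {N : Subgroup B} (hN : IsIdeal N) (f : T →* B)
    (hf : ∀ a x, f (lambda a x) = lambda (f a) (f x)) : IsIdeal (N.comap f) where
  normal := hN.normal.comap f
  lambda_mem a x hx := by
    rw [Subgroup.mem_comap, hf]
    exact hN.lambda_mem (f a) hx

/-- The element `c` generates `B` as an ideal. -/
def IsIdealGenerator (c : B) : Prop :=
  ∀ N : Subgroup B, IsIdeal N → c ∈ N → N = ⊤

variable (B) in
/-- A simple left brace: non-zero, with no ideals besides `{0}` and `B`. -/
structure IsSimple : Prop extends Nontrivial B where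
  eq_bot_or_eq_top : ∀ N : Subgroup B, IsIdeal N → N = ⊥ ∨ N = ⊤

theorem IsSimple.eq_singleton_or_eq_univ (hB : IsSimple B) (N : Set B)
    (hN : (1 : B) ∈ N ∧ (∀ x ∈ N, ∀ y ∈ N, x * y ∈ N) ∧ (∀ x ∈ N, x⁻¹ ∈ N) ∧
      (∀ g : B, ∀ x ∈ N, g * x * g⁻¹ ∈ N) ∧ (∀ b : B, ∀ x ∈ N, b * x - b ∈ N)) :
    N = {(0 : B)} ∨ N = Set.univ := by
  obtain ⟨one_mem, mul_mem, inv_mem, conj_mem, lambda_mem⟩ := hN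
  let S : Subgroup B :=
    { carrier := N
      one_mem' := one_mem
      mul_mem' := fun hx hy => mul_mem _ hx _ hy
      inv_mem' := fun hx => inv_mem _ hx }
  have hS : IsIdeal S := ⟨⟨fun x hx g => conj_mem g x hx⟩, fun a x hx => lambda_mem a x hx⟩
  rw [← one_eq_zero]
  exact (hB.eq_bot_or_eq_top S hS).imp (congrArg SetLike.coe) (congrArg SetLike.coe)

end LeftBrace

/-- The group `G` is solvable of derived length exactly `n`. -/
def HasDerivedLength (G : Type*) [Group G] (n : ℕ) : Prop :=
  derivedSeries G n = ⊥ ∧ ∀ m < n, derivedSeries G m ≠ ⊥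

theorem hasDerivedLength_succ_iff {G : Type*} [Group G] {n : ℕ} :
    HasDerivedLength G (n + 1) ↔ derivedSeries G (n + 1) = ⊥ ∧ derivedSeries G n ≠ ⊥ := by
  refine and_congr_right fun _ => ⟨fun h => h n n.lt_succ_self, fun h m hm hbot => h ?_⟩
  exact eq_bot_mono (derivedSeries_antitone G (Nat.lt_succ_iff.1 hm)) hbot

theorem hasDerivedLength_one {G : Type*} [CommGroup G] [Nontrivial G] : HasDerivedLength G 1 :=
  hasDerivedLength_succ_iff.2
    ⟨commutator_eq_bot G, top_ne_bot⟩

theorem derivedSeries_succ_eq_bot_of_ker {G H : Type*} [Group G] [Group H] (f : G →* H)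
    (hker : ∀ x ∈ f.ker, ∀ y ∈ f.ker, x * y = y * x) {n : ℕ} (hH : derivedSeries H n = ⊥) :
    derivedSeries G (n + 1) = ⊥ := by
  have hle : derivedSeries G n ≤ f.ker := by
    rw [← Subgroup.map_eq_bot_iff, ← le_bot_iff, ← hH]
    exact map_derivedSeries_le_derivedSeries f n
  rw [derivedSeries_succ, eq_bot_iff, Subgroup.commutator_le]
  intro x hx y hy
  exact commutatorElement_eq_one_iff_mul_comm.2 (hker x (hle hx) y (hle hy))

section Actions

variable (T V : Type*) [Group T] [AddCommGroup V] [DistribMulAction T V]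

/-- The module of coinvariants `V_T` vanishes: `V` is generated by the elements `u - g • u`. -/
def HasTrivialCoinvariants : Prop :=
  AddSubgroup.closure {v : V | ∃ (g : T) (u : V), u - g • u = v} = ⊤

/-- No `g ≠ 1` acts quadratically on `V`, that is, `(1 - g)² ≠ 0` on `V` for all `g ≠ 1`. This
strengthening of faithfulness makes the derived length grow in `V ⋊ T`. -/
def HasNoQuadraticElements : Prop :=
  ∀ g : T, g ≠ 1 → ∃ u : V, (u - g • u) - g • (u - g • u) ≠ 0

variable {T V} in
theorem HasNoQuadraticElements.faithfulSMul (h : HasNoQuadraticElements T V) :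
    FaithfulSMul T V where
  eq_of_smul_eq_smul {g₁ g₂} hg := by
    by_contra hne
    obtain ⟨u, hu⟩ := h (g₁⁻¹ * g₂) (by rwa [Ne, inv_mul_eq_one])
    apply hu
    simp [mul_smul, ← hg]

end Actions

/-- A symmetric biadditive map `V × V → T` intertwining the action of `T` on `V` with the lambda
maps of `T`. -/
structure EquivariantForm (V T : Type*) [AddCommGroup V] [LeftBrace T] [DistribMulAction T V] where
  form : V →+ V →+ T
  symm : ∀ v w, form v w = form w v
  lambda_form : ∀ (g : T) (v w : V), LeftBrace.lambda g (form v w) = form (g • v) (g • w)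

namespace EquivariantForm

variable {V T A : Type*} [AddCommGroup V] [LeftBrace T] [DistribMulAction T V] [AddCommGroup A]

instance : Zero (EquivariantForm V T) :=
  ⟨{ form := 0, symm := by simp, lambda_form := by simp }⟩

/-- The equivariant form obtained from an invariant form on `V` by embedding its values into the
lambda-fixed elements of `T`. -/
def ofInvariant (β : V →+ V →+ A) (symm : ∀ v w, β v w = β w v)
    (smul : ∀ (g : T) v w, β (g • v) (g • w) = β v w) (ι : A →+ T)
    (lambda_ι : ∀ g a, LeftBrace.lambda g (ι a) = ι a) : EquivariantForm V T where
  form := (AddMonoidHom.compHom ι).comp β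
  symm v w := congrArg ι (symm v w)
  lambda_form g v w := (lambda_ι g _).trans (congrArg ι (smul g v w).symm)

end EquivariantForm

/-- The asymmetric product of `V` by `T` along `D`: the multiplicative group is `V ⋊ T`, and
`(v, s) + (w, t) = (v + w, s + t + D(v, w))`. -/
@[ext]
structure AsymmetricProduct {V T : Type*} [AddCommGroup V] [LeftBrace T] [DistribMulAction T V]
    (D : EquivariantForm V T) where
  left : V
  right : T

namespace AsymmetricProduct

open LeftBrace

variable {V T : Type*} [AddCommGroup V] [LeftBrace T] [DistribMulAction T V]
  {D : EquivariantForm V T}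

instance [Finite V] [Finite T] : Finite (AsymmetricProduct D) :=
  Finite.of_injective (fun x : AsymmetricProduct D => (x.left, x.right)) fun _ _ h =>
    AsymmetricProduct.ext (congrArg Prod.fst h) (congrArg Prod.snd h)

instance : Mul (AsymmetricProduct D) := ⟨fun x y => ⟨x.left + x.right • y.left, x.right * y.right⟩⟩
instance : One (AsymmetricProduct D) := ⟨⟨0, 1⟩⟩
instance : Inv (AsymmetricProduct D) := ⟨fun x => ⟨-(x.right⁻¹ • x.left), x.right⁻¹⟩⟩
instance : Add (AsymmetricProduct D) :=
  ⟨fun x y => ⟨x.left + y.left, x.right + y.right + D.form x.left y.left⟩⟩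
instance : Zero (AsymmetricProduct D) := ⟨⟨0, 0⟩⟩
instance : Neg (AsymmetricProduct D) := ⟨fun x => ⟨-x.left, -x.right + D.form x.left x.left⟩⟩

section Projections

variable (x y : AsymmetricProduct D)

@[simp] theorem mul_left : (x * y).left = x.left + x.right • y.left := rfl
@[simp] theorem mul_right : (x * y).right = x.right * y.right := rfl
@[simp] theorem one_left : (1 : AsymmetricProduct D).left = 0 := rfl
@[simp] theorem one_right : (1 : AsymmetricProduct D).right = 1 := rfl
@[simp] theorem inv_left : x⁻¹.left = -(x.right⁻¹ • x.left) := rfl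
@[simp] theorem inv_right : x⁻¹.right = x.right⁻¹ := rfl
@[simp] theorem add_left : (x + y).left = x.left + y.left := rfl
@[simp] theorem add_right : (x + y).right = x.right + y.right + D.form x.left y.left := rfl
@[simp] theorem zero_left : (0 : AsymmetricProduct D).left = 0 := rfl
@[simp] theorem zero_right : (0 : AsymmetricProduct D).right = 0 := rfl
@[simp] theorem neg_left : (-x).left = -x.left := rfl
@[simp] theorem neg_right : (-x).right = -x.right + D.form x.left x.left := rfl

end Projections

instance : Group (AsymmetricProduct D) :=
  Group.ofLeftAxioms
    (fun x y z => by ext <;> simp [mul_assoc, mul_smul, add_assoc])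
    (fun x => by ext <;> simp)
    (fun x => by ext <;> simp)

instance : AddGroup (AsymmetricProduct D) :=
  AddGroup.ofLeftAxioms
    (fun x y z => by
      ext
      · simp [add_assoc]
      · simp only [add_right, add_left, map_add, AddMonoidHom.add_apply]
        abel)
    (fun x => by ext <;> simp)
    (fun x => by ext <;> simp)

@[simp] theorem sub_left (x y : AsymmetricProduct D) : (x - y).left = x.left - y.left := by
  simp [sub_eq_add_neg]

@[simp] theorem sub_right (x y : AsymmetricProduct D) :
    (x - y).right = x.right - y.right + D.form y.left y.left - D.form x.left y.left := by
  simp only [sub_eq_add_neg, add_right, neg_right, neg_left, map_neg]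
  abel

instance : LeftBrace (AsymmetricProduct D) where
  add_comm x y := by
    ext
    · simp [add_comm]
    · simp [add_comm x.right, D.symm x.left]
  mul_add_add x y z := by
    ext
    · simp only [add_left, mul_left, smul_add]
      abel
    · simp only [add_right, mul_right, mul_left, add_left, mul_eq_add_lambda, D.lambda_form,
        map_add, smul_add, AddMonoidHom.add_apply, D.symm (x.right • y.left) x.left,
        D.symm (x.right • z.left) x.left]
      abel

/-- The inclusion of `V` into the multiplicative group `V ⋊ T`. -/
def inl : Multiplicative V →* AsymmetricProduct D where
  toFun v := ⟨v.toAdd, 1⟩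
  map_one' := rfl
  map_mul' v w := by ext <;> simp

/-- The inclusion of `T` into the multiplicative group `V ⋊ T`. -/
def inr : T →* AsymmetricProduct D where
  toFun t := ⟨0, t⟩
  map_one' := rfl
  map_mul' s t := by ext <;> simp

/-- The inclusion of `T` into the additive group of the asymmetric product. -/
def inrAdd : T →+ AsymmetricProduct D where
  toFun t := ⟨0, t⟩
  map_zero' := rfl
  map_add' s t := by ext <;> simp

/-- The projection of the multiplicative group `V ⋊ T` onto `T`. -/
def rightHom : AsymmetricProduct D →* T where
  toFun := right
  map_one' := rfl
  map_mul' _ _ := rfl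

@[simp] theorem inl_left (v : Multiplicative V) : (inl v : AsymmetricProduct D).left = v.toAdd :=
  rfl
@[simp] theorem inl_right (v : Multiplicative V) : (inl v : AsymmetricProduct D).right = 1 := rfl
@[simp] theorem inr_left (t : T) : (inr t : AsymmetricProduct D).left = 0 := rfl
@[simp] theorem inr_right (t : T) : (inr t : AsymmetricProduct D).right = t := rfl
@[simp] theorem rightHom_apply (x : AsymmetricProduct D) : rightHom x = x.right := rfl

theorem inrAdd_apply (t : T) : (inrAdd t : AsymmetricProduct D) = inr t := rfl

theorem inl_injective : Function.Injective (inl : Multiplicative V →* AsymmetricProduct D) :=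
  fun _ _ h => congrArg left h

theorem inr_injective : Function.Injective (inr : T →* AsymmetricProduct D) :=
  fun _ _ h => congrArg right h

theorem rightHom_surjective : Function.Surjective (rightHom : AsymmetricProduct D →* T) :=
  fun t => ⟨inr t, rfl⟩

theorem inl_mul_inr (x : AsymmetricProduct D) : inl (.ofAdd x.left) * inr x.right = x := by
  ext <;> simp

theorem lambda_inr (x : AsymmetricProduct D) (t : T) :
    lambda x (inr t) = inr (lambda x.right t) := by
  ext <;> simp [lambda_apply]

theorem commutator_inl (u : V) (x : AsymmetricProduct D) :
    ⁅(inl (.ofAdd u) : AsymmetricProduct D), x⁆ = inl (.ofAdd (u - x.right • u)) := by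
  ext <;> simp [commutatorElement_def, sub_eq_add_neg, add_assoc]

theorem lambda_inl (w : V) (x : AsymmetricProduct D) :
    lambda (inl (.ofAdd w)) x = ⟨x.left, x.right - D.form w x.left⟩ := by
  ext
  · simp [lambda_apply]
  · have hone : x.right - 1 = x.right := by rw [one_eq_zero, sub_zero]
    simp [lambda_apply, hone, D.symm x.left w, sub_add_eq_sub_sub]

theorem sub_lambda_inl (w : V) (x : AsymmetricProduct D) :
    x - lambda (inl (.ofAdd w)) x = inr (D.form w x.left) := by
  rw [lambda_inl]
  ext <;> simp

theorem exists_mul_ne_add [Nontrivial T] [FaithfulSMul T V] :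
    ∃ x y : AsymmetricProduct D, x * y ≠ x + y := by
  obtain ⟨g, hg⟩ := exists_ne (1 : T)
  by_contra! h
  refine hg (FaithfulSMul.eq_of_smul_eq_smul fun u : V => ?_)
  simpa using congrArg left (h (inr g) (inl (.ofAdd u)))

section DerivedLength

variable {n : ℕ}

theorem derivedSeries_succ_eq_bot (hT : derivedSeries T n = ⊥) :
    derivedSeries (AsymmetricProduct D) (n + 1) = ⊥ := by
  refine derivedSeries_succ_eq_bot_of_ker rightHom (fun x hx y hy => ?_) hT
  rw [MonoidHom.mem_ker, rightHom_apply] at hx hy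
  ext <;> simp [hx, hy, add_comm]

theorem derivedSeries_succ_ne_bot (hV : HasNoQuadraticElements T V) (hT : derivedSeries T n ≠ ⊥) :
    derivedSeries (AsymmetricProduct D) (n + 1) ≠ ⊥ := by
  obtain ⟨g, hgT, hg⟩ := (Subgroup.bot_or_exists_ne_one _).resolve_left hT
  rw [← map_derivedSeries_eq (rightHom_surjective (D := D)) n] at hgT
  obtain ⟨x, hx, rfl⟩ := hgT
  obtain ⟨u, hu⟩ := hV _ hg
  -- `[[u, x], x]` lies in the next derived subgroup, and equals `(1 - g)² u ≠ 0` in `V`.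
  have hux : ⁅inl (.ofAdd u), x⁆ ∈ derivedSeries (AsymmetricProduct D) n :=
    Subgroup.commutator_le_right ⊤ _ (Subgroup.commutator_mem_commutator trivial hx)
  have huxx := Subgroup.commutator_mem_commutator hux hx
  rw [commutator_inl, commutator_inl, ← derivedSeries_succ] at huxx
  intro hbot
  rw [hbot, Subgroup.mem_bot, map_eq_one_iff inl inl_injective, ofAdd_eq_one] at huxx
  exact hu huxx

theorem hasDerivedLength_succ (hV : HasNoQuadraticElements T V)
    (hT : HasDerivedLength T (n + 1)) : HasDerivedLength (AsymmetricProduct D) (n + 2) := by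
  rw [hasDerivedLength_succ_iff] at hT ⊢
  exact ⟨derivedSeries_succ_eq_bot hT.1, derivedSeries_succ_ne_bot hV hT.2⟩

end DerivedLength

section Ideals

variable {N : Subgroup (AsymmetricProduct D)}

theorem inr_form_mem (hN : IsIdeal N) {x : AsymmetricProduct D} (hx : x ∈ N) (w : V) :
    inr (D.form w x.left) ∈ N := by
  rw [← sub_lambda_inl]
  exact hN.sub_mem hx (hN.lambda_mem _ hx)

theorem inl_sub_smul_mem (hN : IsIdeal N) {g : T} (hg : inr g ∈ N) (u : V) :
    inl (.ofAdd (u - g • u)) ∈ N := by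
  have h := hN.commutator_mem (inl (.ofAdd u)) hg
  rwa [commutator_inl, inr_right] at h

theorem isIdealGenerator_inr (hV : HasTrivialCoinvariants T V) {c : T} (hc : IsIdealGenerator c) :
    IsIdealGenerator (inr c : AsymmetricProduct D) := by
  intro N hN hcN
  have inr_mem : ∀ t, inr t ∈ N := fun t => by
    have hcomap := hc (N.comap inr) (hN.comap inr fun a x => (lambda_inr (inr a) x).symm) hcN
    exact hcomap.ge (Subgroup.mem_top t)
  have inl_mem : ∀ v, inl (.ofAdd v) ∈ N := fun v => by
    have hle : AddSubgroup.closure {v : V | ∃ (g : T) (u : V), u - g • u = v} ≤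
        Subgroup.toAddSubgroup' (N.comap inl) := by
      rw [AddSubgroup.closure_le]
      rintro _ ⟨g, u, rfl⟩
      exact inl_sub_smul_mem hN (inr_mem g) u
    exact hle (hV.ge (AddSubgroup.mem_top v))
  refine eq_top_iff.2 fun x _ => ?_
  rw [← inl_mul_inr x]
  exact N.mul_mem (inl_mem _) (inr_mem _)

theorem isSimple [Nontrivial T] [FaithfulSMul T V] (hV : HasTrivialCoinvariants T V) {c : T}
    (hc : IsIdealGenerator c) (hD : ∀ v : V, v ≠ 0 → ∃ w, D.form w v = c) :
    IsSimple (AsymmetricProduct D) where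
  toNontrivial := inr_injective.nontrivial
  eq_bot_or_eq_top N hN := by
    refine or_iff_not_imp_left.2 fun hne => ?_
    have eq_top_of_left_ne_zero : ∀ x ∈ N, x.left ≠ 0 → N = ⊤ := fun x hx hx0 => by
      obtain ⟨w, rfl⟩ := hD _ hx0
      exact isIdealGenerator_inr hV hc N hN (inr_form_mem hN hx w)
    obtain ⟨x, hx, hx1⟩ := (Subgroup.bot_or_exists_ne_one N).resolve_left hne
    by_cases hleft : x.left = 0
    · have hxr : inr x.right = x := by ext <;> simp [hleft]
      obtain ⟨u, hu⟩ : ∃ u : V, x.right • u ≠ u := by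
        by_contra! h
        have hright : x.right = 1 := FaithfulSMul.eq_of_smul_eq_smul fun u : V => by simp [h]
        exact hx1 (by rw [← hxr, hright, map_one])
      exact eq_top_of_left_ne_zero _ (inl_sub_smul_mem hN (hxr.symm ▸ hx) u)
        (sub_ne_zero.2 hu.symm)
    · exact eq_top_of_left_ne_zero x hx hleft

end Ideals

end AsymmetricProduct

/-- The functions `f : T → R` with `f (t z) = -f t`. For an involution `z` this is the `T`-module
induced from the sign character of `⟨z⟩`. -/
def signInduced (R : Type*) {T : Type*} [Mul T] [AddCommGroup R] (z : T) : AddSubgroup (T → R) where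
  carrier := {f | ∀ t, f (t * z) = -f t}
  zero_mem' := by simp
  add_mem' hf hg t := by simp [hf t, hg t, add_comm]
  neg_mem' hf t := by simp [hf t]

namespace signInduced

variable {R T : Type*} [Group T] {z : T}

section Action

variable [AddCommGroup R]

instance : DistribMulAction T (signInduced R z) where
  smul g f := ⟨fun t => f.1 (g⁻¹ * t), fun t => by
    simpa only [mul_assoc] using f.2 (g⁻¹ * t)⟩
  one_smul f := Subtype.ext <| funext fun t => congrArg f.1 (by simp)
  mul_smul g h f := Subtype.ext <| funext fun t => congrArg f.1 (by simp [mul_assoc])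
  smul_zero _ := rfl
  smul_add _ _ _ := rfl

theorem smul_apply (g : T) (f : signInduced R z) (t : T) : (g • f).1 t = f.1 (g⁻¹ * t) := rfl

variable [DecidableEq T] (hz : z * z = 1)

/-- The function with value `r` at `t`, `-r` at `t z`, and `0` elsewhere. -/
def single (t : T) (r : R) : signInduced R z :=
  ⟨Pi.single t r - Pi.single (t * z) r, fun x => by
    have hxt : x * z = t ↔ x = t * z := by
      rw [← eq_mul_inv_iff_mul_eq, inv_eq_of_mul_eq_one_left hz]
    simp [Pi.single_apply, hxt]⟩

theorem coe_single (t : T) (r : R) :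
    (single hz t r : T → R) = Pi.single t r - Pi.single (t * z) r := rfl

theorem single_apply (t : T) (r : R) (x : T) :
    (single hz t r).1 x = (if x = t then r else 0) - (if x = t * z then r else 0) := by
  simp [coe_single, Pi.single_apply]

theorem smul_single (g t : T) (r : R) : g • single hz t r = single hz (g * t) r := by
  ext x
  simp [smul_apply, single_apply, inv_mul_eq_iff_eq_mul, mul_assoc]

theorem single_mul (t : T) (r : R) : single hz (t * z) r = -single hz t r := by
  ext x
  simp [coe_single, mul_assoc, hz]

theorem single_add (t : T) (r s : R) : single hz t (r + s) = single hz t r + single hz t s := by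
  ext x
  simp only [coe_single, Pi.single_add, AddSubgroup.coe_add, Pi.sub_apply, Pi.add_apply]
  abel

end Action

section Ring

variable [CommRing R] [Invertible (2 : R)] (hz : z * z = 1)

theorem sum_single [Fintype T] [DecidableEq T] (f : signInduced R z) :
    ∑ t, single hz t (⅟2 * f.1 t) = f := by
  ext x
  have hxz : ∀ t, x = t * z ↔ x * z = t := fun t => by
    rw [← mul_inv_eq_iff_eq_mul, inv_eq_of_mul_eq_one_left hz]
  have hsum : ∑ t, (single hz t (⅟2 * f.1 t)).1 x = ⅟2 * f.1 x - ⅟2 * f.1 (x * z) := by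
    simp [single_apply, hxz]
  rw [AddSubgroup.val_finsetSum, Finset.sum_apply, hsum, f.2 x, mul_neg, sub_neg_eq_add,
    ← two_mul, mul_invOf_cancel_left']

include hz in
theorem hasTrivialCoinvariants [Finite T] : HasTrivialCoinvariants T (signInduced R z) := by
  classical
  have := Fintype.ofFinite T
  refine eq_top_iff.2 fun f _ => ?_
  rw [← sum_single hz f]
  refine AddSubgroup.sum_mem _ fun t _ => AddSubgroup.subset_closure ?_
  refine ⟨t * z * t⁻¹, single hz t (⅟2 * (⅟2 * f.1 t)), ?_⟩
  rw [smul_single, inv_mul_cancel_right, single_mul, sub_neg_eq_add, ← single_add, ← two_mul,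
    mul_invOf_cancel_left']

include hz in
theorem hasNoQuadraticElements [Nontrivial R] (hz1 : z ≠ 1) :
    HasNoQuadraticElements T (signInduced R z) := by
  classical
  intro g hg
  refine ⟨single hz 1 1, fun h => ?_⟩
  have hval : (single hz 1 1 : signInduced R z).1 g - (single hz g 1).1 g -
      ((single hz g 1).1 g - (single hz (g * g) 1).1 g) = 0 := by
    simpa [smul_sub, smul_single] using congrFun (congrArg Subtype.val h) g
  have hggz : g = g * g * z ↔ g = z := by
    rw [mul_assoc, left_eq_mul, mul_eq_one_iff_eq_inv, inv_eq_of_mul_eq_one_left hz]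
  have h2 : (2 : R) ≠ 0 := Invertible.ne_zero 2
  have h4 : (2 : R) * 2 ≠ 0 :=
    ((isUnit_of_invertible 2).mul (isUnit_of_invertible 2)).ne_zero
  simp only [single_apply, hggz, one_mul, hg, left_eq_mul, hz1, if_true, if_false] at hval
  split_ifs at hval
  · exact h4 (by linear_combination -hval)
  · exact h2 (by linear_combination -hval)

end Ring

section Form

variable [Fintype T]

/-- The standard form `(f, g) ↦ ∑ t, f t * g t`. -/
def dotForm (R : Type*) [CommRing R] (z : T) : signInduced R z →+ signInduced R z →+ R :=
  AddMonoidHom.mk'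
    (fun f => AddMonoidHom.mk' (fun g => f.1 ⬝ᵥ g.1) fun g h => dotProduct_add f.1 g.1 h.1)
    fun f g => AddMonoidHom.ext fun h => add_dotProduct f.1 g.1 h.1

theorem dotForm_apply [CommRing R] (f g : signInduced R z) : dotForm R z f g = f.1 ⬝ᵥ g.1 := rfl

theorem dotForm_comm [CommRing R] (f g : signInduced R z) : dotForm R z f g = dotForm R z g f :=
  dotProduct_comm f.1 g.1

theorem dotForm_smul_smul [CommRing R] (a : T) (f g : signInduced R z) :
    dotForm R z (a • f) (a • g) = dotForm R z f g :=
  comp_equiv_dotProduct_comp_equiv f.1 g.1 (Equiv.mulLeft a⁻¹)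

theorem dotForm_single [CommRing R] [DecidableEq T] (hz : z * z = 1) (t : T) (r : R)
    (f : signInduced R z) : dotForm R z (single hz t r) f = 2 * r * f.1 t := by
  rw [dotForm_apply, coe_single, sub_dotProduct, single_dotProduct, single_dotProduct, f.2 t]
  ring

theorem exists_dotForm_eq_one {K : Type*} [Field K] [Invertible (2 : K)] (hz : z * z = 1)
    {f : signInduced K z} (hf : f ≠ 0) : ∃ g, dotForm K z g f = 1 := by
  classical
  obtain ⟨t, ht⟩ := Function.ne_iff.1 (Subtype.coe_ne_coe.2 hf)
  refine ⟨single hz t (⅟2 * (f.1 t)⁻¹), ?_⟩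
  rw [dotForm_single, mul_invOf_cancel_left', inv_mul_cancel₀ ht]

end Form

end signInduced

/-- An additive map `ι` from `R` into the lambda-fixed elements of `T` such that `ι 1` generates `T`
as an ideal. It turns `R`-valued invariant forms into `T`-valued equivariant forms. -/
structure FixedGenerator (R T : Type*) [AddGroupWithOne R] [LeftBrace T] where
  ι : R →+ T
  lambda_ι : ∀ g r, LeftBrace.lambda g (ι r) = ι r
  isIdealGenerator : LeftBrace.IsIdealGenerator (ι 1)

namespace FixedGenerator

variable {R T V : Type*} [LeftBrace T]

/-- A fixed generator of `T` remains one in every asymmetric product by `T` of a module with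
trivial coinvariants. -/
def asymmetricProduct [AddGroupWithOne R] [AddCommGroup V] [DistribMulAction T V]
    (s : FixedGenerator R T) (D : EquivariantForm V T) (hV : HasTrivialCoinvariants T V) :
    FixedGenerator R (AsymmetricProduct D) where
  ι := AsymmetricProduct.inrAdd.comp s.ι
  lambda_ι x r := by
    rw [AddMonoidHom.comp_apply, AsymmetricProduct.inrAdd_apply, AsymmetricProduct.lambda_inr,
      s.lambda_ι]
  isIdealGenerator := AsymmetricProduct.isIdealGenerator_inr hV s.isIdealGenerator

/-- The standard form of `signInduced R z`, with values in the image of `ι`. -/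
def signInducedForm [CommRing R] [Fintype T] (s : FixedGenerator R T) (z : T) :
    EquivariantForm (signInduced R z) T :=
  .ofInvariant (signInduced.dotForm R z) signInduced.dotForm_comm signInduced.dotForm_smul_smul
    s.ι s.lambda_ι

theorem isSimple_asymmetricProduct {K : Type*} [Field K] [Invertible (2 : K)] [Fintype T]
    (s : FixedGenerator K T) {z : T} (hz : z * z = 1) (hz1 : z ≠ 1) :
    LeftBrace.IsSimple (AsymmetricProduct (s.signInducedForm z)) := by
  have : Nontrivial T := ⟨z, 1, hz1⟩
  have := (signInduced.hasNoQuadraticElements (R := K) hz hz1).faithfulSMul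
  refine AsymmetricProduct.isSimple (signInduced.hasTrivialCoinvariants hz) s.isIdealGenerator ?_
  intro f hf
  obtain ⟨g, hg⟩ := signInduced.exists_dotForm_eq_one hz hf
  exact ⟨g, congrArg s.ι hg⟩

end FixedGenerator

/-- The trivial brace on `A`, with `a·b = a+b`. -/
def TrivialBrace (A : Type*) := A

namespace TrivialBrace

section Instances

variable {A : Type*}

instance [Fintype A] : Fintype (TrivialBrace A) := inferInstanceAs (Fintype A)
instance [DecidableEq A] : DecidableEq (TrivialBrace A) := inferInstanceAs (DecidableEq A)
instance [Nontrivial A] : Nontrivial (TrivialBrace A) := inferInstanceAs (Nontrivial A)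
instance [AddCommGroup A] : AddCommGroup (TrivialBrace A) := inferInstanceAs (AddCommGroup A)
instance [AddCommGroup A] : CommGroup (TrivialBrace A) :=
  inferInstanceAs (CommGroup (Multiplicative A))

theorem mul_eq_add [AddCommGroup A] (a b : TrivialBrace A) : a * b = a + b := rfl

instance [AddCommGroup A] : LeftBrace (TrivialBrace A) where
  mul_add_add a b c := by
    simp only [mul_eq_add]
    abel

end Instances

/-- The additive generator `1` of the trivial brace on `ℤ/n`. -/
def fixedGenerator (n : ℕ) : FixedGenerator (ZMod n) (TrivialBrace (ZMod n)) where
  ι := AddMonoidHom.id (ZMod n)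
  lambda_ι g r := add_sub_cancel_left g r
  isIdealGenerator N _ h1 := by
    refine eq_top_iff.2 fun x _ => ?_
    obtain ⟨k, rfl⟩ := ZMod.intCast_surjective x
    rw [← zsmul_one]
    exact N.zpow_mem h1 k

/-- Multiplication by a primitive cube root of unity `ω` on `𝔽₄ = 𝔽₂ ⊕ 𝔽₂ω`. -/
def mulOmega (v : ZMod 2 × ZMod 2) : ZMod 2 × ZMod 2 := (v.2, v.1 + v.2)

/-- The action of `ℤ/3` on `𝔽₂²` giving `A₄` as semidirect product. -/
instance : DistribMulAction (TrivialBrace (ZMod 3)) (ZMod 2 × ZMod 2) where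
  smul t v := mulOmega^[ZMod.val (n := 3) t] v
  one_smul := by decide
  mul_smul := by decide
  smul_zero := by decide
  smul_add := by decide

theorem hasTrivialCoinvariants_klein :
    HasTrivialCoinvariants (TrivialBrace (ZMod 3)) (ZMod 2 × ZMod 2) := by
  have h : ∀ v : ZMod 2 × ZMod 2, ∃ (g : TrivialBrace (ZMod 3)) (u : ZMod 2 × ZMod 2),
      u - g • u = v := by decide
  exact eq_top_iff.2 fun v _ => AddSubgroup.subset_closure (h v)

theorem hasNoQuadraticElements_klein :
    HasNoQuadraticElements (TrivialBrace (ZMod 3)) (ZMod 2 × ZMod 2) := by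
  unfold HasNoQuadraticElements
  decide

end TrivialBrace

instance : Invertible (2 : ZMod 3) := ⟨2, by decide, by decide⟩

theorem exists_brace_with_involution_of_derivedLength (n : ℕ) (hn : 2 ≤ n) :
    ∃ (T : Type) (_ : LeftBrace T) (z : T), z * z = 1 ∧ z ≠ 1 ∧ Finite T ∧
      HasDerivedLength T n ∧ Nonempty (FixedGenerator (ZMod 3) T) := by
  induction n, hn using Nat.le_induction with
  | base =>
    let A := AsymmetricProduct (0 : EquivariantForm (ZMod 2 × ZMod 2) (TrivialBrace (ZMod 3)))
    have hinl : Function.Injective (AsymmetricProduct.inl : _ →* A) :=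
      AsymmetricProduct.inl_injective
    refine ⟨A, inferInstance, AsymmetricProduct.inl (.ofAdd (1, 0)), ?_, ?_, inferInstance,
      AsymmetricProduct.hasDerivedLength_succ TrivialBrace.hasNoQuadraticElements_klein
        hasDerivedLength_one,
      ⟨(TrivialBrace.fixedGenerator 3).asymmetricProduct 0
        TrivialBrace.hasTrivialCoinvariants_klein⟩⟩
    · rw [← map_mul, ← map_one AsymmetricProduct.inl]
      exact congrArg _ (by decide)
    · rw [Ne, map_eq_one_iff _ hinl]
      decide
  | succ n hn ih =>
    obtain ⟨T, _, z, hz, hz1, _, hT, ⟨s⟩⟩ := ih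
    obtain ⟨k, rfl⟩ := Nat.exists_eq_add_of_le' (one_le_two.trans hn)
    refine ⟨AsymmetricProduct (0 : EquivariantForm (signInduced (ZMod 3) z) T), inferInstance,
      AsymmetricProduct.inr z, ?_, ?_, inferInstance,
      AsymmetricProduct.hasDerivedLength_succ (signInduced.hasNoQuadraticElements hz hz1) hT,
      ⟨s.asymmetricProduct 0 (signInduced.hasTrivialCoinvariants hz)⟩⟩
    · rw [← map_mul, hz, map_one]
    · rwa [Ne, map_eq_one_iff _ AsymmetricProduct.inr_injective]

/-- for every integer `n ≥ 2` there exists a finite simple non-trivial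
left brace whose multiplicative group is solvable of derived length exactly `n + 1`. -/
theorem exists_simple_brace_of_derived_length (n : ℕ) (hn : 2 ≤ n) :
    Nonempty (SimpleSolvableBraceWitness n) := by
  obtain ⟨T, _, z, hz, hz1, _, hT, ⟨s⟩⟩ := exists_brace_with_involution_of_derivedLength n hn
  obtain ⟨k, rfl⟩ := Nat.exists_eq_add_of_le' (one_le_two.trans hn)
  have := Fintype.ofFinite T
  have : Nontrivial T := ⟨z, 1, hz1⟩
  have hquad := signInduced.hasNoQuadraticElements (R := ZMod 3) hz hz1
  have := hquad.faithfulSMul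
  have hsimple := s.isSimple_asymmetricProduct hz hz1
  have := hsimple.toNontrivial
  exact ⟨{
    B := AsymmetricProduct (s.signInducedForm z)
    compat := LeftBrace.mul_add_add
    finiteB := inferInstance
    nontrivial_brace := AsymmetricProduct.exists_mul_ne_add
    nonzero := exists_ne 0
    simple := hsimple.eq_singleton_or_eq_univ
    derived_length := AsymmetricProduct.hasDerivedLength_succ hquad hT }⟩
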